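/- (Proposition 2, part 1) For a hybrid formula φ and a nominal i not occurring in φ: the disjunctive state P : φ is winning if and only if the disjunctive state P, i : φ is winning. -/

import Mathlib

/-- Hybrid logic formulas over nominals `ℕ` and propositional variables `ℕ`
(the two sorts are kept disjoint by the constructors). -/
inductive Form : Type where
  | prop : ℕ → Form
  | nom : ℕ → Form
  | rel : ℕ → ℕ → Form
  | and : Form → Form → Form
  | or : Form → Form → Form
  | imp : Form → Form → Form
  | neg : Form → Form
  | at_ : ℕ → Form → Form
  | box : Form → Form
  | dia : Form → Form

/-- A model for hybrid logic: a nonempty set of worlds, an accessibility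
relation, a valuation and an assignment of nominals to worlds. -/
structure Model where
  W : Type
  ne : Nonempty W
  R : W → W → Prop
  V : ℕ → W → Prop
  g : ℕ → W

/-- Satisfaction of a formula at a world of a model. -/
def sat (M : Model) : M.W → Form → Prop
  | w, .prop p => M.V p w
  | w, .nom i => M.g i = w
  | _, .rel i j => M.R (M.g i) (M.g j)
  | w, .and φ ψ => sat M w φ ∧ sat M w ψ
  | w, .or φ ψ => sat M w φ ∨ sat M w ψ
  | w, .imp φ ψ => ¬ sat M w φ ∨ sat M w ψ
  | w, .neg φ => ¬ sat M w φ
  | _, .at_ i φ => sat M (M.g i) φ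
  | w, .box φ => ∀ v, M.R w v → sat M v φ
  | w, .dia φ => ∃ v, M.R w v ∧ sat M v φ

/-- A model is named iff every world has a name, i.e. the assignment is surjective. -/
def Model.Named (M : Model) : Prop := Function.Surjective M.g

/-- A formula is valid iff it is true at every world of every model. -/
def Valid (φ : Form) : Prop := ∀ (M : Model) (w : M.W), sat M w φ

/-- Roles: `pro` means I am the proponent (`P`), `opp` that I am the opponent (`O`). -/
inductive Role : Type where
  | pro : Role
  | opp : Role

/-- Role switch. -/
def Role.swap : Role → Role
  | .pro => .opp
  | .opp => .pro

/-- Game states of the semantic game over a named model, with worlds referred to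
by their names: `loc r i φ` is `Q, i : φ` and `glob r φ` is `Q : φ`. -/
inductive NState : Type where
  | loc : Role → ℕ → Form → NState
  | glob : Role → Form → NState

/-- Elementary formulas: `p`, `i`, `R(i,j)`. -/
def Form.elem : Form → Prop
  | .prop _ => True
  | .nom _ => True
  | .rel _ _ => True
  | _ => False

/-- Elementary game states: states `Q, i : φ` with `φ` elementary (these are the
leaves of the semantic game over named models). -/
def NState.elem : NState → Prop
  | .loc _ _ φ => φ.elem
  | .glob _ _ => False

/-- States labelled "I" (where it is My choice); all other non-leaf states are labelled "Y". -/
def NState.myTurn : NState → Prop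
  | .loc .pro _ (.or _ _) => True
  | .loc .pro _ (.imp _ _) => True
  | .loc .pro _ (.neg _) => True
  | .loc .pro _ (.at_ _ _) => True
  | .loc .pro _ (.dia _) => True
  | .loc .opp _ (.and _ _) => True
  | .loc .opp _ (.box _) => True
  | .glob .opp _ => True
  | _ => False

/-- The (model-independent) child relation of the semantic game over named models,
using the reformulated rules `(R_□)`, `(R_◇)` and `(R_U)`:
`NChild s t` says that `t` is a child of `s` in the game tree. -/
inductive NChild : NState → NState → Prop where
  | orL (r i φ ψ) : NChild (.loc r i (.or φ ψ)) (.loc r i φ)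
  | orR (r i φ ψ) : NChild (.loc r i (.or φ ψ)) (.loc r i ψ)
  | andL (r i φ ψ) : NChild (.loc r i (.and φ ψ)) (.loc r i φ)
  | andR (r i φ ψ) : NChild (.loc r i (.and φ ψ)) (.loc r i ψ)
  | impL (r i φ ψ) : NChild (.loc r i (.imp φ ψ)) (.loc r.swap i φ)
  | impR (r i φ ψ) : NChild (.loc r i (.imp φ ψ)) (.loc r i ψ)
  | neg (r i φ) : NChild (.loc r i (.neg φ)) (.loc r.swap i φ)
  | at_ (r i j φ) : NChild (.loc r i (.at_ j φ)) (.loc r j φ)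
  | box (r i φ) (j : ℕ) : NChild (.loc r i (.box φ)) (.loc r j (.or (.neg (.rel i j)) φ))
  | dia (r i φ) (j : ℕ) : NChild (.loc r i (.dia φ)) (.loc r j (.and (.rel i j) φ))
  | glob (r φ) (i : ℕ) : NChild (.glob r φ) (.loc r i φ)

/-- The label of an elementary leaf state in the game over the model `M`:
"I" iff the corresponding elementary claim is correct. -/
def elemIWin (M : Model) : NState → Prop
  | .loc .pro i φ => sat M (M.g i) φ
  | .loc .opp i φ => ¬ sat M (M.g i) φ
  | .glob _ _ => False

/-- I have a winning strategy for the semantic game `G(M, s)` over a named model: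
at "I"-nodes I keep one child, at "Y"-nodes all children, and all leaves are labelled "I". -/
inductive IWinsN (M : Model) : NState → Prop where
  | leaf {s} : s.elem → elemIWin M s → IWinsN M s
  | move {s t} : s.myTurn → NChild s t → IWinsN M t → IWinsN M s
  | resp {s} : ¬ s.myTurn → ¬ s.elem → (∀ t, NChild s t → IWinsN M t) → IWinsN M s

/-- You have a winning strategy for the semantic game `G(M, s)` over a named model:
at "Y"-nodes You keep one child, at "I"-nodes all children, and all leaves are labelled "Y". -/
inductive YWinsN (M : Model) : NState → Prop where
  | leaf {s} : s.elem → ¬ elemIWin M s → YWinsN M s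
  | move {s t} : ¬ s.myTurn → NChild s t → YWinsN M t → YWinsN M s
  | resp {s} : s.myTurn → (∀ t, NChild s t → YWinsN M t) → YWinsN M s

/-- A disjunctive state: a finite multiset of game states. -/
abbrev DState : Type := Multiset NState

/-- A disjunctive state is elementary iff all its game states are. -/
def DElem (D : DState) : Prop := ∀ s ∈ D, s.elem

/-- A regulation function maps every non-elementary disjunctive state to one of
its non-elementary game states. -/
def IsRegulation (ρ : DState → NState) : Prop :=
  ∀ D : DState, ¬ DElem D → ρ D ∈ D ∧ ¬ (ρ D).elem

/-- `D` is game valid: for every named model `M` there is a member of `D` for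
which I have a winning strategy in the semantic game over `M`. -/
def GameValid (D : DState) : Prop :=
  ∀ M : Model, M.Named → ∃ s ∈ D, IWinsN M s

/-- I have a winning strategy for the disjunctive game `DG(D, ρ)`.
At the state `g ⋁ D` with `ρ (g ⋁ D) = g`: if `g` is labelled "I", I either move in `g`
or duplicate `g`; if `g` is labelled "Y", You move in `g` and I must win after every move.
An elementary disjunctive state is a leaf labelled "I" (winning for Me) iff for every named
model some member of it is a leaf labelled "I" of the semantic game over that model.
Since winning strategies are wellfounded trees, infinite plays are not winning for Me. -/
inductive DWins (ρ : DState → NState) : DState → Prop where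
  | leaf {D : DState} : DElem D → (∀ M : Model, M.Named → ∃ s ∈ D, IWinsN M s) →
      DWins ρ D
  | movI {D : DState} {g g' : NState} : ρ (g ::ₘ D) = g → g.myTurn → NChild g g' →
      DWins ρ (g' ::ₘ D) → DWins ρ (g ::ₘ D)
  | dup {D : DState} {g : NState} : ρ (g ::ₘ D) = g → g.myTurn →
      DWins ρ (g ::ₘ g ::ₘ D) → DWins ρ (g ::ₘ D)
  | movY {D : DState} {g : NState} : ρ (g ::ₘ D) = g → ¬ g.myTurn → ¬ g.elem →
      (∀ g', NChild g g' → DWins ρ (g' ::ₘ D)) → DWins ρ (g ::ₘ D)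

/-- `D` is winning: there is a regulation `ρ` such that I have a winning strategy
for `DG(D, ρ)`. -/
def Winning (D : DState) : Prop :=
  ∃ ρ : DState → NState, IsRegulation ρ ∧ DWins ρ D

/-- `Form.occurs k φ`: the nominal `k` occurs in the formula `φ`. -/
def Form.occurs (k : ℕ) : Form → Prop
  | .prop _ => False
  | .nom i => i = k
  | .rel i j => i = k ∨ j = k
  | .and φ ψ => φ.occurs k ∨ ψ.occurs k
  | .or φ ψ => φ.occurs k ∨ ψ.occurs k
  | .imp φ ψ => φ.occurs k ∨ ψ.occurs k
  | .neg φ => φ.occurs k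
  | .at_ i φ => i = k ∨ φ.occurs k
  | .box φ => φ.occurs k
  | .dia φ => φ.occurs k

/-- A nominal occurs in a game state iff it occurs as its label or in its formula. -/
def NState.occurs (k : ℕ) : NState → Prop
  | .loc _ i φ => i = k ∨ φ.occurs k
  | .glob _ φ => φ.occurs k

/-- A nominal occurs in a disjunctive state iff it occurs in one of its game states. -/
def DOccurs (k : ℕ) (D : DState) : Prop := ∃ s ∈ D, s.occurs k

/-
A winning strategy for `P, i : φ` can be renamed along any *surjective* map `σ` of nominals:
surjectivity makes every child of a renamed state the renaming of a child, and keeps named models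
named when nominals are reinterpreted along `σ`. Since `i` is fresh, some surjection sends `i` to a
prescribed `j` and fixes the nominals of `φ`, so `P, j : φ` is winning for every `j`.

Renaming can identify positions, and Your answers to `P : φ` lead to games won with different
regulations, so the winning positions have to be won by one single regulation. One exists because
they form a least fixed point: regulate each position by a game state through which it enters that
fixed point at the earliest ordinal stage.
-/

open OrderHom (lfp)
open OrdinalApprox (lfpApprox lfpApprox_le_of_mem_fixedPoints lfp_mem_range_lfpApprox)

theorem exists_rank_forall_mem_lfp.{u} {X : Type u} (f : Set X →o Set X) :
    ∃ rank : X → Ordinal.{u}, ∀ x ∈ lfp f, x ∈ f {y ∈ lfp f | rank y < rank x} := by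
  let rank (x : X) : Ordinal.{u} := sInf {a | x ∈ lfpApprox f ⊥ a}
  refine ⟨rank, fun x hx => ?_⟩
  have mem_stage_rank : x ∈ lfpApprox f ⊥ (rank x) := by
    obtain ⟨a, ha⟩ := lfp_mem_range_lfpApprox f
    exact csInf_mem (s := {a | x ∈ lfpApprox f ⊥ a}) ⟨a, ha.symm.subset hx⟩
  obtain ⟨a, ha, hxa⟩ : ∃ a < rank x, x ∈ f (lfpApprox f ⊥ a) := by
    rw [lfpApprox] at mem_stage_rank
    simpa using mem_stage_rank
  have stage_subset : lfpApprox f ⊥ a ⊆ {y ∈ lfp f | rank y < rank x} := fun y hy =>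
    ⟨lfpApprox_le_of_mem_fixedPoints f f.isFixedPt_lfp bot_le a hy,
      (csInf_le' (s := {b | y ∈ lfpApprox f ⊥ b}) hy).trans_lt ha⟩
  exact f.monotone stage_subset hxa

theorem exists_surjective_eqOn {α β : Type*} [Infinite α] [Countable β] (f : α → β) {s : Set α}
    (hs : s.Finite) : ∃ g : α → β, g.Surjective ∧ s.EqOn g f := by
  have : Infinite ↑sᶜ := hs.infinite_compl.to_subtype
  obtain ⟨code, hcode⟩ := exists_injective_nat β
  let e : β → α := fun b => Infinite.natEmbedding ↑sᶜ (code b)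
  have he : e.Injective :=
    Subtype.val_injective.comp ((Infinite.natEmbedding _).injective.comp hcode)
  refine ⟨Function.extend e id f, fun b => ⟨e b, he.extend_apply _ _ b⟩, fun a ha => ?_⟩
  refine Function.extend_apply' _ _ a ?_
  rintro ⟨b, rfl⟩
  exact (Infinite.natEmbedding ↑sᶜ (code b)).2 ha

namespace Form

/-- The formula `φ[σ]` in which each nominal `i` is replaced by `σ i`. -/
def rename (σ : ℕ → ℕ) : Form → Form
  | prop p => prop p
  | nom i => nom (σ i)
  | rel i j => rel (σ i) (σ j)
  | and φ ψ => and (φ.rename σ) (ψ.rename σ)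
  | or φ ψ => or (φ.rename σ) (ψ.rename σ)
  | imp φ ψ => imp (φ.rename σ) (ψ.rename σ)
  | neg φ => neg (φ.rename σ)
  | at_ i φ => at_ (σ i) (φ.rename σ)
  | box φ => box (φ.rename σ)
  | dia φ => dia (φ.rename σ)

theorem rename_eq_self {σ : ℕ → ℕ} {φ : Form} (h : ∀ k, φ.occurs k → σ k = k) :
    φ.rename σ = φ := by
  induction φ <;> simp_all [rename, occurs]

theorem finite_setOf_occurs (φ : Form) : {k | φ.occurs k}.Finite := by
  induction φ <;> simp_all [occurs, Set.ofPred_or]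

end Form

/-- The model `M` with nominals reinterpreted along `σ`: a formula holds in it iff its renaming
along `σ` holds in `M`. -/
def Model.reassign (M : Model) (σ : ℕ → ℕ) : Model :=
  { M with g := M.g ∘ σ }

theorem Model.Named.reassign {M : Model} (hM : M.Named) {σ : ℕ → ℕ} (hσ : σ.Surjective) :
    (M.reassign σ).Named :=
  hM.comp hσ

theorem sat_reassign {M : Model} {σ : ℕ → ℕ} {w : M.W} {φ : Form} :
    sat (M.reassign σ) w φ ↔ sat M w (φ.rename σ) := by
  induction φ generalizing w <;> simp_all [sat, Form.rename, Model.reassign]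

namespace NState

/-- The game state in which each nominal `i`, in the label and in the formula, is replaced by
`σ i`. -/
def rename (σ : ℕ → ℕ) : NState → NState
  | loc r i φ => loc r (σ i) (φ.rename σ)
  | glob r φ => glob r (φ.rename σ)

variable {σ : ℕ → ℕ} {s : NState}

theorem elem_rename : (s.rename σ).elem ↔ s.elem := by
  rcases s with ⟨_, _, _ | _⟩ | _ <;> rfl

theorem myTurn_rename : (s.rename σ).myTurn ↔ s.myTurn := by
  rcases s with ⟨_ | _, _, _ | _⟩ | ⟨_ | _, _⟩ <;> rfl

theorem not_elem_of_myTurn (h : s.myTurn) : ¬ s.elem := by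
  rcases s with ⟨_ | _, _, _ | _⟩ | _ <;> simp_all [myTurn, elem, Form.elem]

theorem elemIWin_rename {M : Model} : elemIWin M (s.rename σ) ↔ elemIWin (M.reassign σ) s := by
  rcases s with ⟨_ | _, _, _⟩ | _
  · exact sat_reassign.symm
  · exact not_congr sat_reassign.symm
  · rfl

end NState

section Renaming

variable {σ : ℕ → ℕ}

theorem NChild.rename {s t : NState} (h : NChild s t) : NChild (s.rename σ) (t.rename σ) := by
  cases h <;> constructor

theorem NChild.exists_of_rename (hσ : σ.Surjective) {s t : NState} (h : NChild (s.rename σ) t) :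
    ∃ s', NChild s s' ∧ s'.rename σ = t := by
  rcases s with ⟨r, i, φ⟩ | ⟨r, φ⟩
  · cases φ with
    | prop | nom | rel => cases h
    | and => cases h; exacts [⟨_, .andL .., rfl⟩, ⟨_, .andR .., rfl⟩]
    | or => cases h; exacts [⟨_, .orL .., rfl⟩, ⟨_, .orR .., rfl⟩]
    | imp => cases h; exacts [⟨_, .impL .., rfl⟩, ⟨_, .impR .., rfl⟩]
    | neg => cases h; exact ⟨_, .neg .., rfl⟩
    | at_ => cases h; exact ⟨_, .at_ .., rfl⟩
    | box =>
      cases h with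
      | box _ _ _ j =>
        obtain ⟨k, rfl⟩ := hσ j
        exact ⟨_, .box _ _ _ k, rfl⟩
    | dia =>
      cases h with
      | dia _ _ _ j =>
        obtain ⟨k, rfl⟩ := hσ j
        exact ⟨_, .dia _ _ _ k, rfl⟩
  · cases h with
    | glob _ _ j =>
      obtain ⟨k, rfl⟩ := hσ j
      exact ⟨_, .glob _ _ k, rfl⟩

theorem IWinsN.rename (hσ : σ.Surjective) {M : Model} {s : NState}
    (h : IWinsN (M.reassign σ) s) : IWinsN M (s.rename σ) := by
  induction h with
  | leaf he hw => exact .leaf (NState.elem_rename.2 he) (NState.elemIWin_rename.2 hw)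
  | move hm hc _ ih => exact .move (NState.myTurn_rename.2 hm) hc.rename ih
  | resp hm he _ ih =>
    refine .resp (NState.myTurn_rename.not.2 hm) (NState.elem_rename.not.2 he) fun t ht => ?_
    obtain ⟨s', hs', rfl⟩ := ht.exists_of_rename hσ
    exact ih s' hs'

theorem DElem.rename {D : DState} (h : DElem D) : DElem (D.map (NState.rename σ)) := by
  simpa [DElem, NState.elem_rename] using h

theorem GameValid.rename (hσ : σ.Surjective) {D : DState} (h : GameValid D) :
    GameValid (D.map (NState.rename σ)) := by
  intro M hM
  obtain ⟨s, hs, hw⟩ := h (M.reassign σ) (hM.reassign hσ)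
  exact ⟨s.rename σ, Multiset.mem_map_of_mem _ hs, hw.rename hσ⟩

end Renaming

/-- `DRound T D g`: at the disjunctive state `D`, either the game ends with a win for Me, or `g` is
an admissible choice of the regulation and I can then ensure that the next disjunctive state lies
in `T`. This is a single round of `DWins` with the regulation left open; when the game ends, `g` is
arbitrary. -/
inductive DRound (T : Set DState) : DState → NState → Prop where
  | leaf {D : DState} {g : NState} : DElem D → GameValid D → DRound T D g
  | move {D : DState} {g g' : NState} : g.myTurn → NChild g g' → g' ::ₘ D ∈ T →
      DRound T (g ::ₘ D) g
  | dup {D : DState} {g : NState} : g.myTurn → g ::ₘ g ::ₘ D ∈ T → DRound T (g ::ₘ D) g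
  | resp {D : DState} {g : NState} : ¬ g.myTurn → ¬ g.elem →
      (∀ g', NChild g g' → g' ::ₘ D ∈ T) → DRound T (g ::ₘ D) g

namespace DRound

variable {T T' : Set DState} {D : DState} {g : NState}

theorem mono (hT : T ⊆ T') (h : DRound T D g) : DRound T' D g := by
  cases h with
  | leaf he hv => exact .leaf he hv
  | move hm hc h => exact .move hm hc (hT h)
  | dup hm h => exact .dup hm (hT h)
  | resp hm he h => exact .resp hm he fun g' hc => hT (h g' hc)

theorem mem_and_not_elem (h : DRound T D g) (hD : ¬ DElem D) : g ∈ D ∧ ¬ g.elem := by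
  cases h with
  | leaf he _ => exact absurd he hD
  | move hm | dup hm =>
    exact ⟨Multiset.mem_cons_self _ _, NState.not_elem_of_myTurn hm⟩
  | resp _ he => exact ⟨Multiset.mem_cons_self _ _, he⟩

theorem rename {σ : ℕ → ℕ} (hσ : σ.Surjective)
    (h : DRound (Multiset.map (NState.rename σ) ⁻¹' T) D g) :
    DRound T (D.map (NState.rename σ)) (g.rename σ) := by
  cases h with
  | leaf he hv => exact .leaf he.rename (hv.rename hσ)
  | move hm hc h =>
    rw [Multiset.map_cons]
    exact .move (NState.myTurn_rename.2 hm) hc.rename (by simpa using h)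
  | dup hm h =>
    rw [Multiset.map_cons]
    exact .dup (NState.myTurn_rename.2 hm) (by simpa using h)
  | resp hm he h =>
    rw [Multiset.map_cons]
    refine .resp (NState.myTurn_rename.not.2 hm) (NState.elem_rename.not.2 he) fun t ht => ?_
    obtain ⟨s', hs', rfl⟩ := ht.exists_of_rename hσ
    simpa using h s' hs'

end DRound

namespace DWins

variable {ρ : DState → NState} {D : DState}

theorem of_round (h : DRound {D | DWins ρ D} D (ρ D)) : DWins ρ D := by
  generalize hg : ρ D = g at h
  cases h with
  | leaf he hv => exact .leaf he hv
  | move hm hc h => exact .movI hg hm hc h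
  | dup hm h => exact .dup hg hm h
  | resp hm he h => exact .movY hg hm he h

theorem mem_of_forall_round {T : Set DState} (hT : ∀ D g, DRound T D g → D ∈ T)
    (h : DWins ρ D) : D ∈ T := by
  induction h with
  | leaf he hv => exact hT _ (.glob .pro (.prop 0)) (.leaf he hv)
  | movI _ hm hc _ ih => exact hT _ _ (.move hm hc ih)
  | dup _ hm _ ih => exact hT _ _ (.dup hm ih)
  | movY _ hm he _ ih => exact hT _ _ (.resp hm he ih)

end DWins

/-- The operator sending `T` to the disjunctive states from which, for a suitable choice of the
regulated game state, I can win at once or move into `T`. -/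
def roundHom : Set DState →o Set DState where
  toFun T := {D | ∃ g, DRound T D g}
  monotone' _ _ hT _ := Exists.imp fun _ => DRound.mono hT

theorem exists_isRegulation_forall_dWins :
    ∃ ρ, IsRegulation ρ ∧ ∀ D ∈ lfp roundHom, DWins ρ D := by
  obtain ⟨rank, hrank⟩ := exists_rank_forall_mem_lfp roundHom
  have choice (D : DState) : ∃ g, (¬ DElem D → g ∈ D ∧ ¬ g.elem) ∧
      (D ∈ lfp roundHom → DRound {D' ∈ lfp roundHom | rank D' < rank D} D g) := by
    by_cases hD : D ∈ lfp roundHom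
    · obtain ⟨g, hg⟩ := hrank D hD
      exact ⟨g, hg.mem_and_not_elem, fun _ => hg⟩
    · by_cases he : DElem D
      · exact ⟨.glob .pro (.prop 0), absurd he, (absurd · hD)⟩
      · obtain ⟨g, hg⟩ : ∃ g ∈ D, ¬ g.elem := by simpa [DElem] using he
        exact ⟨g, fun _ => hg, (absurd · hD)⟩
  choose ρ hρ hround using choice
  refine ⟨ρ, hρ, fun D => ?_⟩
  induction D using (InvImage.wf rank wellFounded_lt).induction with
  | _ D ih => exact fun hD => .of_round ((hround D hD).mono fun D' hD' => ih D' hD'.2 hD'.1)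

theorem setOf_winning : {D | Winning D} = lfp roundHom := by
  obtain ⟨ρ, hρ, hwins⟩ := exists_isRegulation_forall_dWins
  refine Set.Subset.antisymm ?_ fun D hD => ⟨ρ, hρ, hwins D hD⟩
  rintro D ⟨ρ', -, hD⟩
  exact hD.mem_of_forall_round fun D g h => roundHom.map_lfp.le ⟨g, h⟩

theorem winning_iff_exists_round {D : DState} :
    Winning D ↔ ∃ g, DRound {D | Winning D} D g := by
  change D ∈ {D | Winning D} ↔ D ∈ roundHom {D | Winning D}
  rw [setOf_winning, roundHom.map_lfp]

theorem Winning.rename {σ : ℕ → ℕ} (hσ : σ.Surjective) {D : DState} (h : Winning D) :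
    Winning (D.map (NState.rename σ)) := by
  obtain ⟨ρ, -, hD⟩ := h
  exact hD.mem_of_forall_round (T := Multiset.map (NState.rename σ) ⁻¹' {D | Winning D})
    fun D g h => winning_iff_exists_round.2 ⟨_, h.rename hσ⟩

theorem Winning.loc_of_not_occurs {r : Role} {i : ℕ} {φ : Form} (hi : ¬ φ.occurs i)
    (h : Winning {.loc r i φ}) (j : ℕ) : Winning {.loc r j φ} := by
  obtain ⟨σ, hσ, hσφ⟩ := exists_surjective_eqOn (Function.update id i j)
    (φ.finite_setOf_occurs.insert i)
  have hφ : φ.rename σ = φ := Form.rename_eq_self fun k hk => by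
    rw [hσφ (.inr hk), Function.update_of_ne (by rintro rfl; exact hi hk), id]
  have hij : σ i = j := by simpa using hσφ (.inl rfl)
  simpa [NState.rename, hφ, hij] using h.rename hσ

theorem winning_singleton_iff {g : NState} (hm : ¬ g.myTurn) (he : ¬ g.elem) :
    Winning {g} ↔ ∀ g', NChild g g' → Winning {g'} := by
  refine ⟨fun h => ?_, fun h => winning_iff_exists_round.2 ⟨g, .resp (D := 0) hm he h⟩⟩
  obtain ⟨p, h⟩ := winning_iff_exists_round.1 h
  generalize hD : ({g} : DState) = D at h
  cases h with
  | leaf hD' => exact absurd (hD' g (hD ▸ Multiset.mem_singleton_self g)) he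
  | move hp | dup hp =>
    obtain ⟨rfl, rfl⟩ := (Multiset.singleton_eq_cons_iff _).1 hD
    exact absurd hp hm
  | resp _ _ h =>
    obtain ⟨rfl, rfl⟩ := (Multiset.singleton_eq_cons_iff _).1 hD
    exact h

theorem winning_glob_pro_iff {φ : Form} :
    Winning {.glob .pro φ} ↔ ∀ i, Winning {.loc .pro i φ} := by
  rw [winning_singleton_iff (g := .glob .pro φ) id id]
  exact ⟨fun h i => h _ (.glob _ _ i), by rintro h _ ⟨⟩; exact h _⟩

/-- (Proposition 2, part 1) For a nominal `i` not occurring in `φ`: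
`P : φ` is winning iff `P, i : φ` is winning. -/
theorem winning_glob_iff_winning_fresh (φ : Form) (i : ℕ) (hi : ¬ Form.occurs i φ) :
    Winning {NState.glob .pro φ} ↔ Winning {NState.loc .pro i φ} := by
  rw [winning_glob_pro_iff]
  exact ⟨fun h => h i, fun h => h.loc_of_not_occurs hi⟩
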